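/- Consider schedules given by finite lists l over labels {1,…,m} in which label j occurs exactly n_j ≥ 1 times; each item with label j has processing duration t_j > 0, and additionally a setup time s_j > 0 is incurred by every item that starts a new run of its label (i.e., the item is first in the list or its label differs from the preceding item's label); the completion time of the k-th item is the sum of the durations (including setups) of items 1 through k, and the total response time T(l) is the sum of the completion times of all items. Define the weight w_j = t_j + s_j/n_j. Let l* be the schedule consisting of m contiguous blocks, block j containing all n_j occurrences of label j, with the blocks arranged in nondecreasing order of w_j. Then T(l*) ≤ T(l) for every schedule l with the same label multiset. -/

import Mathlib

/-- Durations of the items of a schedule (a list of labels): an item of label `j` takes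
time `t j`, plus its setup time `s j` whenever it starts a new run of its label, i.e. the
previous item (tracked by `prev`, initially `none`) does not have the same label. -/
def durList {m : ℕ} (t s : Fin m → ℝ) : Option (Fin m) → List (Fin m) → List ℝ
  | _, [] => []
  | prev, a :: rest => (t a + if prev = some a then 0 else s a) :: durList t s (some a) rest

/-- Sum of the completion times of all items, given the list of item durations:
the `k`-th completion time is the sum of durations of items `1..k`, so each duration
is counted once for itself and once for every later item. -/
def sumCompletions : List ℝ → ℝ
  | [] => 0
  | x :: xs => x * (xs.length + 1) + sumCompletions xs

/-- Total response time `T(l)` of a schedule `l`: sum of the completion times of all items. -/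
def totalResponse {m : ℕ} (t s : Fin m → ℝ) (l : List (Fin m)) : ℝ :=
  sumCompletions (durList t s none l)

/-!
Charge the setup time of function `j` evenly to its `n j` requests, so that each of them counts as a
job of duration `w j = t j + s j / n j`. Every schedule pays `s j` at least once, before its first
request of `j`; there it delays at least `(n j - 1) / 2` more completions than the even shares do on
average. So the response time exceeds the sum of completion times of the jobs of duration `w j` by
at least `∑ j, s j * (n j - 1) / 2`, with equality for every schedule made of contiguous blocks.
Only the sum of completion times of the modified jobs is left to minimize, and there serving the
shortest job first is optimal.
-/

section CompletionTimes

theorem sumCompletions_orderedInsert_le (x : ℝ) (xs : List ℝ) :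
    sumCompletions (xs.orderedInsert (· ≤ ·) x) ≤ sumCompletions (x :: xs) := by
  induction xs with
  | nil => rfl
  | cons y ys ih =>
    rw [List.orderedInsert_cons]
    split_ifs with hxy
    · rfl
    · simp only [sumCompletions, List.orderedInsert_length, List.length_cons] at ih ⊢
      push_cast
      linarith

theorem sumCompletions_insertionSort_le (xs : List ℝ) :
    sumCompletions (xs.insertionSort (· ≤ ·)) ≤ sumCompletions xs := by
  induction xs with
  | nil => rfl
  | cons x xs ih =>
    calc sumCompletions ((x :: xs).insertionSort (· ≤ ·))
        ≤ sumCompletions (x :: xs.insertionSort (· ≤ ·)) := sumCompletions_orderedInsert_le x _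
      _ ≤ sumCompletions (x :: xs) := by
        simpa only [sumCompletions, List.length_insertionSort, add_le_add_iff_left] using ih

theorem sumCompletions_le_of_pairwise_le_of_perm {xs ys : List ℝ} (hsorted : xs.Pairwise (· ≤ ·))
    (hperm : xs.Perm ys) : sumCompletions xs ≤ sumCompletions ys := by
  have hxs : xs = ys.insertionSort (· ≤ ·) :=
    (hperm.trans (ys.perm_insertionSort _).symm).eq_of_pairwise' hsorted
      (ys.pairwise_insertionSort _)
  exact hxs ▸ sumCompletions_insertionSort_le ys

theorem sumCompletions_replicate_append (k : ℕ) (x : ℝ) (xs : List ℝ) :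
    sumCompletions (List.replicate k x ++ xs) =
      x * (k * xs.length + k * (k + 1) / 2) + sumCompletions xs := by
  induction k with
  | zero => simp
  | succ k ih =>
    simp only [List.replicate_succ, List.cons_append, sumCompletions, ih, List.length_append,
      List.length_replicate]
    push_cast
    ring

end CompletionTimes

section Delays

variable {ι : Type*} [DecidableEq ι]

/-- The rate at which the sum of completion times of the schedule `l` grows with a common duration
of the items labelled `j`: each such item delays itself and all later items. -/
def labelDelay (j : ι) (l : List ι) : ℝ :=
  sumCompletions (l.map (Pi.single j 1))

/-- The number of items of `l` from the first occurrence of `j` onwards, which are the ones delayed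
by the first setup for `j`. It is `0` if `j` does not occur, as then `l.idxOf j = l.length`. -/
def firstDelay (j : ι) (l : List ι) : ℝ :=
  l.length - l.idxOf j

theorem labelDelay_cons_self (j : ι) (l : List ι) :
    labelDelay j (j :: l) = l.length + 1 + labelDelay j l := by
  simp [labelDelay, sumCompletions]

theorem labelDelay_cons_of_ne {i j : ι} (h : i ≠ j) (l : List ι) :
    labelDelay j (i :: l) = labelDelay j l := by
  simp [labelDelay, sumCompletions, h]

theorem firstDelay_cons_self (j : ι) (l : List ι) : firstDelay j (j :: l) = l.length + 1 := by
  simp [firstDelay]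

theorem firstDelay_cons_of_ne {i j : ι} (h : i ≠ j) (l : List ι) :
    firstDelay j (i :: l) = firstDelay j l := by
  simp [firstDelay, List.idxOf_cons_ne l h]

theorem sumCompletions_map_eq_sum_labelDelay (w : ι → ℝ) {l : List ι} {S : Finset ι}
    (hS : ∀ i ∈ l, i ∈ S) : sumCompletions (l.map w) = ∑ j ∈ S, w j * labelDelay j l := by
  induction l with
  | nil => simp [labelDelay, sumCompletions]
  | cons a l ih =>
    obtain ⟨ha, hl⟩ := List.forall_mem_cons.1 hS
    have hcons (j : ι) : w j * labelDelay j (a :: l) =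
        (if a = j then w j * (l.length + 1) else 0) + w j * labelDelay j l := by
      split_ifs with haj
      · rw [haj, labelDelay_cons_self, mul_add]
      · rw [labelDelay_cons_of_ne haj, zero_add]
    simp only [hcons, Finset.sum_add_distrib, Finset.sum_ite_eq, if_pos ha, ← ih hl, List.map_cons,
      sumCompletions, List.length_map]

theorem labelDelay_add_le_count_mul_length (j : ι) (l : List ι) :
    labelDelay j l + l.count j * (l.count j - 1) / 2 ≤ l.count j * l.length := by
  induction l with
  | nil => simp [labelDelay, sumCompletions]
  | cons a l ih =>
    by_cases haj : a = j
    · subst haj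
      rw [labelDelay_cons_self, List.count_cons_self, List.length_cons]
      push_cast
      linarith
    · rw [labelDelay_cons_of_ne haj, List.count_cons_of_ne haj, List.length_cons]
      push_cast
      linarith [(l.count j).cast_nonneg (α := ℝ)]

theorem labelDelay_add_le_count_mul_firstDelay (j : ι) (l : List ι) :
    labelDelay j l + l.count j * (l.count j - 1) / 2 ≤ l.count j * firstDelay j l := by
  induction l with
  | nil => simp [labelDelay, sumCompletions]
  | cons a l ih =>
    by_cases haj : a = j
    · subst haj
      rw [firstDelay_cons_self, ← Nat.cast_add_one, ← List.length_cons (a := a)]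
      exact labelDelay_add_le_count_mul_length a (a :: l)
    · rwa [labelDelay_cons_of_ne haj, firstDelay_cons_of_ne haj, List.count_cons_of_ne haj]

end Delays

section Blocks

variable {ι : Type*}

/-- The schedule serving the labels in the order `ks`, label `j` in one block of `n j` items. -/
def blockSchedule (n : ι → ℕ) (ks : List ι) : List ι :=
  ks.flatMap fun j => List.replicate (n j) j

theorem blockSchedule_cons (n : ι → ℕ) (a : ι) (ks : List ι) :
    blockSchedule n (a :: ks) = List.replicate (n a) a ++ blockSchedule n ks :=
  List.flatMap_cons

theorem pairwise_blockSchedule {r : ι → ι → Prop} [Std.Refl r] (n : ι → ℕ) {ks : List ι}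
    (hks : ks.Pairwise r) : (blockSchedule n ks).Pairwise r := by
  refine List.pairwise_flatMap.2 ⟨fun a _ => List.pairwise_replicate.2 (.inr (refl a)), ?_⟩
  refine hks.imp fun hab x hx y hy => ?_
  rwa [List.eq_of_mem_replicate hx, List.eq_of_mem_replicate hy]

theorem count_blockSchedule [DecidableEq ι] (n : ι → ℕ) {ks : List ι} (hks : ks.Nodup) (j : ι) :
    (blockSchedule n ks).count j = if j ∈ ks then n j else 0 := by
  induction ks with
  | nil => rfl
  | cons a ks ih =>
    obtain ⟨ha, hks⟩ := List.nodup_cons.1 hks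
    rw [blockSchedule_cons, List.count_append, List.count_replicate, ih hks]
    by_cases haj : a = j
    · subst haj
      simp [ha]
    · simp [haj, Ne.symm haj]

theorem blockSchedule_count_perm [DecidableEq ι] {l ks : List ι} (hks : ks.Nodup)
    (hmem : ∀ j, j ∈ ks ↔ j ∈ l) : (blockSchedule (l.count ·) ks).Perm l := by
  refine List.perm_iff_count.2 fun j => ?_
  rw [count_blockSchedule _ hks, ite_eq_left_iff, hmem]
  exact fun hj => (List.count_eq_zero.2 hj).symm

end Blocks

section Setups

variable {m : ℕ} (t s : Fin m → ℝ)

/-- The weight `w_j = t_j + s_j / n_j` of a function with `n_j ≥ 1` requests. -/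
noncomputable def weight (n : Fin m → ℕ) (j : Fin m) : ℝ :=
  t j + s j / n j

theorem length_durList (prev : Option (Fin m)) (l : List (Fin m)) :
    (durList t s prev l).length = l.length := by
  induction l generalizing prev with
  | nil => rfl
  | cons a l ih => simp only [durList, List.length_cons, ih]

theorem durList_some_replicate_append (k : ℕ) (a : Fin m) (l : List (Fin m)) :
    durList t s (some a) (List.replicate k a ++ l) =
      List.replicate k (t a) ++ durList t s (some a) l := by
  induction k with
  | zero => rfl
  | succ k ih => simp [List.replicate_succ, durList, ih]

theorem sumCompletions_durList_replicate_append {prev : Option (Fin m)} {a : Fin m}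
    (hprev : prev ≠ some a) {k : ℕ} (hk : k ≠ 0) (l : List (Fin m)) :
    sumCompletions (durList t s prev (List.replicate k a ++ l)) =
      s a * (k + l.length) + t a * (k * l.length + k * (k + 1) / 2) +
        sumCompletions (durList t s (some a) l) := by
  obtain ⟨k, rfl⟩ := Nat.exists_eq_succ_of_ne_zero hk
  simp only [List.replicate_succ, List.cons_append, durList, if_neg hprev, sumCompletions,
    durList_some_replicate_append, sumCompletions_replicate_append, List.length_append,
    List.length_replicate, length_durList]
  push_cast
  ring

theorem sumCompletions_durList_blockSchedule {n : Fin m → ℕ} {ks : List (Fin m)} (hks : ks.Nodup)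
    (hn : ∀ j ∈ ks, n j ≠ 0) {prev : Option (Fin m)} (hprev : ∀ j ∈ ks, prev ≠ some j) :
    sumCompletions (durList t s prev (blockSchedule n ks)) =
      sumCompletions ((blockSchedule n ks).map (weight t s n)) +
        ∑ j ∈ ks.toFinset, s j * (n j - 1) / 2 := by
  induction ks generalizing prev with
  | nil => simp [blockSchedule, durList]
  | cons a ks ih =>
    obtain ⟨ha, hks⟩ := List.nodup_cons.1 hks
    obtain ⟨hna, hn⟩ := List.forall_mem_cons.1 hn
    have hprev' : ∀ j ∈ ks, some a ≠ some j := fun j hj h => ha (Option.some.inj h ▸ hj)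
    have hna' : (n a : ℝ) ≠ 0 := Nat.cast_ne_zero.2 hna
    rw [blockSchedule_cons,
      sumCompletions_durList_replicate_append t s (hprev a List.mem_cons_self) hna,
      ih hks hn hprev', List.map_append, List.map_replicate, sumCompletions_replicate_append,
      List.length_map, List.toFinset_cons, Finset.sum_insert (by simpa using ha), weight]
    field_simp
    ring

theorem totalResponse_blockSchedule {n : Fin m → ℕ} {ks : List (Fin m)} (hks : ks.Nodup)
    (hn : ∀ j ∈ ks, n j ≠ 0) :
    totalResponse t s (blockSchedule n ks) =
      sumCompletions ((blockSchedule n ks).map (weight t s n)) +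
        ∑ j ∈ ks.toFinset, s j * (n j - 1) / 2 :=
  sumCompletions_durList_blockSchedule t s hks hn fun _ _ => nofun

variable {s}

theorem sumCompletions_map_add_sum_firstDelay_le (hs : ∀ j, 0 ≤ s j) (l : List (Fin m))
    {S : Finset (Fin m)} {prev : Option (Fin m)} (hprev : ∀ j ∈ S, prev ≠ some j) :
    sumCompletions (l.map t) + ∑ j ∈ S, s j * firstDelay j l ≤
      sumCompletions (durList t s prev l) := by
  induction l generalizing S prev with
  | nil => simp [firstDelay, durList]
  | cons a l ih =>
    have hrest : sumCompletions (l.map t) + ∑ j ∈ S.erase a, s j * firstDelay j l ≤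
        sumCompletions (durList t s (some a) l) :=
      ih fun j hj h => Finset.ne_of_mem_erase hj (Option.some.inj h).symm
    have herase : ∑ j ∈ S.erase a, s j * firstDelay j (a :: l) =
        ∑ j ∈ S.erase a, s j * firstDelay j l :=
      Finset.sum_congr rfl fun j hj => by
        rw [firstDelay_cons_of_ne (Finset.ne_of_mem_erase hj).symm]
    have hfirst : ∑ j ∈ S, s j * firstDelay j (a :: l) ≤
        (if prev = some a then 0 else s a) * (l.length + 1) +
          ∑ j ∈ S.erase a, s j * firstDelay j l := by
      by_cases haS : a ∈ S
      · rw [← Finset.add_sum_erase S _ haS, herase, firstDelay_cons_self, if_neg (hprev a haS)]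
      · rw [Finset.erase_eq_of_notMem haS] at herase ⊢
        rw [herase, le_add_iff_nonneg_left]
        have hsa := hs a
        positivity
    simp only [List.map_cons, durList, sumCompletions, length_durList, List.length_map]
    linarith

theorem sumCompletions_map_weight_add_le_totalResponse (hs : ∀ j, 0 ≤ s j) (l : List (Fin m)) :
    sumCompletions (l.map (weight t s (l.count ·))) +
        ∑ j ∈ l.toFinset, s j * (l.count j - 1) / 2 ≤ totalResponse t s l := by
  have hmem : ∀ j ∈ l, j ∈ l.toFinset := fun _ => List.mem_toFinset.2
  refine le_trans ?_ (sumCompletions_map_add_sum_firstDelay_le t hs l (S := l.toFinset)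
    (prev := none) fun _ _ => nofun)
  rw [sumCompletions_map_eq_sum_labelDelay _ hmem, sumCompletions_map_eq_sum_labelDelay _ hmem,
    ← Finset.sum_add_distrib, ← Finset.sum_add_distrib]
  refine Finset.sum_le_sum fun j hj => ?_
  have hpos : (0 : ℝ) < l.count j :=
    Nat.cast_pos.2 (List.count_pos_iff.2 (List.mem_toFinset.1 hj))
  calc weight t s (l.count ·) j * labelDelay j l + s j * (l.count j - 1) / 2
      = t j * labelDelay j l +
          s j / l.count j * (labelDelay j l + l.count j * (l.count j - 1) / 2) := by
        rw [weight]
        field_simp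
        ring
    _ ≤ t j * labelDelay j l + s j / l.count j * (l.count j * firstDelay j l) := by
        gcongr
        · exact div_nonneg (hs j) hpos.le
        · exact labelDelay_add_le_count_mul_firstDelay j l
    _ = t j * labelDelay j l + s j * firstDelay j l := by
        field_simp

end Setups

theorem stmt_10_general {m : ℕ} (t : Fin m → ℝ) {s : Fin m → ℝ} (hs : ∀ j, 0 ≤ s j)
    {l ks : List (Fin m)} (hks : ks.Nodup) (hmem : ∀ j, j ∈ ks ↔ j ∈ l)
    (hsorted : ks.Pairwise fun i j => weight t s (l.count ·) i ≤ weight t s (l.count ·) j) :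
    totalResponse t s (blockSchedule (l.count ·) ks) ≤ totalResponse t s l := by
  set w := weight t s (l.count ·)
  have hn : ∀ j ∈ ks, l.count j ≠ 0 := fun j hj => (List.count_pos_iff.2 ((hmem j).1 hj)).ne'
  have : Std.Refl fun i j => w i ≤ w j := ⟨fun _ => le_rfl⟩
  have hshortest : sumCompletions ((blockSchedule (l.count ·) ks).map w) ≤
      sumCompletions (l.map w) :=
    sumCompletions_le_of_pairwise_le_of_perm
      (List.pairwise_map.2 (pairwise_blockSchedule _ hsorted))
      ((blockSchedule_count_perm hks hmem).map w)
  calc totalResponse t s (blockSchedule (l.count ·) ks)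
      = sumCompletions ((blockSchedule (l.count ·) ks).map w) +
          ∑ j ∈ l.toFinset, s j * (l.count j - 1) / 2 := by
        rw [totalResponse_blockSchedule t s hks hn, List.toFinset.ext hmem]
    _ ≤ sumCompletions (l.map w) + ∑ j ∈ l.toFinset, s j * (l.count j - 1) / 2 := by gcongr
    _ ≤ totalResponse t s l := sumCompletions_map_weight_add_le_totalResponse t hs l

/-- Full SSFS optimality theorem: the schedule consisting of `m` contiguous blocks
(block `j` containing all `n j` occurrences of label `j`) arranged, via the
permutation `σ`, in nondecreasing order of weight `w_j = t_j + s_j/n_j`, minimizes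
the total response time among all schedules with the same label multiset. -/
theorem stmt_10 {m : ℕ} (t s : Fin m → ℝ) (n : Fin m → ℕ)
    (ht : ∀ j, 0 < t j) (hs : ∀ j, 0 < s j) (hn : ∀ j, 1 ≤ n j)
    (σ : Equiv.Perm (Fin m))
    (hsorted : ∀ i j : Fin m, i ≤ j →
      t (σ i) + s (σ i) / (n (σ i) : ℝ) ≤ t (σ j) + s (σ j) / (n (σ j) : ℝ)) :
    ∀ l : List (Fin m), (∀ j, l.count j = n j) →
      totalResponse t s ((List.finRange m).flatMap fun k => List.replicate (n (σ k)) (σ k))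
        ≤ totalResponse t s l := by
  intro l hl
  obtain rfl : (l.count ·) = n := funext hl
  have hmem : ∀ j, j ∈ (List.finRange m).map σ ↔ j ∈ l := fun j => by
    simpa [σ.surjective j] using List.count_pos_iff.1 (hn j)
  have hpairwise : ((List.finRange m).map σ).Pairwise fun i j =>
      weight t s (l.count ·) i ≤ weight t s (l.count ·) j :=
    List.pairwise_map.2 ((List.pairwise_le_finRange m).imp (hsorted _ _))
  simpa only [blockSchedule, List.flatMap_map] using stmt_10_general t (fun j => (hs j).le)
    ((List.nodup_finRange m).map σ.injective) hmem hpairwise
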